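/- Let φ₁ : ℤ⁵ → ℤ² be the group homomorphism determined on the standard generators a, b, c, d, μ of ℤ⁵ by φ₁(a) = 0, φ₁(b) = 0, φ₁(c) = (1,0), φ₁(d) = (0,1), φ₁(μ) = 0, and let φ₂ : ℤ⁵ → ℤ² be determined by φ₂(a) = 0, φ₂(b) = (0,1), φ₂(c) = (1,0), φ₂(d) = 0, φ₂(μ) = 0. Then the pushout of φ₁ and φ₂ in the category of groups is isomorphic to ℤ. -/

import Mathlib

/-!
Both `φ₁` and `φ₂` are surjective, and a pushout of surjections out of `H` is the quotient of `H`
by the join of their kernels. Every standard generator of `ℤ⁵` except `c` is killed by `φ₁` or by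
`φ₂`, whereas the `c`-coordinate factors through both maps; so this join is the kernel of the
`c`-coordinate `ℤ⁵ → ℤ`.
-/

section PushoutOfSurjections

open Function Monoid

variable {ι H : Type*} {G : ι → Type*} [Group H] [∀ i, Group (G i)] {φ : ∀ i, H →* G i}

theorem pushoutI_base_surjective (hφ : ∀ i, Surjective (φ i)) :
    Surjective (PushoutI.base φ) := by
  intro x
  induction x using PushoutI.induction_on with
  | of i g =>
    obtain ⟨h, rfl⟩ := hφ i g
    exact ⟨h, (PushoutI.of_apply_eq_base φ i h).symm⟩
  | base h => exact ⟨h, rfl⟩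
  | mul x y hx hy =>
    obtain ⟨h, rfl⟩ := hx
    obtain ⟨h', rfl⟩ := hy
    exact ⟨h * h', map_mul _ h h'⟩

theorem iSup_ker_le_ker_pushoutI_base : ⨆ i, (φ i).ker ≤ (PushoutI.base φ).ker :=
  iSup_le fun i h hh => by
    rw [MonoidHom.mem_ker] at hh ⊢
    rw [← PushoutI.of_apply_eq_base φ i, hh, map_one]

variable {K : Type*} [Group K] {k : H →* K}

theorem ker_pushoutI_base_le (hφ : ∀ i, Surjective (φ i)) (hk : ∀ i, (φ i).ker ≤ k.ker) :
    (PushoutI.base φ).ker ≤ k.ker := by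
  let descend (i : ι) : G i →* K := (φ i).liftOfSurjective (hφ i) ⟨k, hk i⟩
  have descend_comp (i : ι) : (descend i).comp (φ i) = k :=
    (φ i).liftOfRightInverse_comp _ _ ⟨k, hk i⟩
  intro h hh
  rw [MonoidHom.mem_ker] at hh ⊢
  rw [← PushoutI.lift_base descend k descend_comp, hh, map_one]

theorem ker_pushoutI_base_eq (hφ : ∀ i, Surjective (φ i)) (hker : k.ker = ⨆ i, (φ i).ker) :
    (PushoutI.base φ).ker = k.ker :=
  (ker_pushoutI_base_le hφ fun i => hker ▸ le_iSup (fun i => (φ i).ker) i).antisymm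
    (hker ▸ iSup_ker_le_ker_pushoutI_base)

theorem nonempty_pushoutI_mulEquiv_of_ker_eq (hφ : ∀ i, Surjective (φ i)) (hk : Surjective k)
    (hker : k.ker = ⨆ i, (φ i).ker) : Nonempty (PushoutI φ ≃* K) :=
  ⟨(QuotientGroup.quotientKerEquivOfSurjective _ (pushoutI_base_surjective hφ)).symm.trans <|
    (QuotientGroup.quotientMulEquivOfEq (ker_pushoutI_base_eq hφ hker)).trans <|
      QuotientGroup.quotientKerEquivOfSurjective k hk⟩

end PushoutOfSurjections

section FreeAbelian

open Multiplicative

theorem surjective_of_map_eq_basis {M : Type*} [Group M] {f : M →* Multiplicative (ℤ × ℤ)}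
    {u v : M} (hu : f u = ofAdd (1, 0)) (hv : f v = ofAdd (0, 1)) : Function.Surjective f :=
  fun x => ⟨u ^ x.toAdd.1 * v ^ x.toAdd.2, by
    rw [map_mul, map_zpow, map_zpow, hu, hv]
    apply toAdd.injective
    ext <;> simp⟩

variable {ι : Type*}

/-- The `j`-th coordinate `ℤ^ι → ℤ`, with both groups written multiplicatively. -/
def coordHom (j : ι) : Multiplicative (ι → ℤ) →* Multiplicative ℤ :=
  AddMonoidHom.toMultiplicative (Pi.evalAddMonoidHom (fun _ => ℤ) j)

theorem coordHom_surjective (j : ι) : Function.Surjective (coordHom j) :=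
  fun n => ⟨ofAdd fun _ => n.toAdd, rfl⟩

variable [DecidableEq ι]

theorem prod_ofAdd_single_zpow [Fintype ι] (x : Multiplicative (ι → ℤ)) :
    ∏ i, ofAdd (Pi.single i (1 : ℤ) : ι → ℤ) ^ x.toAdd i = x := by
  apply toAdd.injective
  rw [toAdd_prod]
  ext j
  simp [Finset.sum_apply, Pi.single_apply]

variable [Finite ι] {j : ι}

theorem ker_coordHom_le {N : Subgroup (Multiplicative (ι → ℤ))}
    (hN : ∀ i ≠ j, ofAdd (Pi.single i 1) ∈ N) : (coordHom j).ker ≤ N := by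
  have := Fintype.ofFinite ι
  intro x hx
  have hxj : x.toAdd j = 0 := hx
  rw [← prod_ofAdd_single_zpow x]
  refine N.prod_mem fun i _ => ?_
  obtain rfl | hij := eq_or_ne i j
  · rw [hxj, zpow_zero]
    exact N.one_mem
  · exact N.zpow_mem (hN i hij) _

theorem ker_le_ker_coordHom {A : Type*} [Group A] {f : Multiplicative (ι → ℤ) →* A}
    (p : A →* Multiplicative ℤ)
    (hp : ∀ i, p (f (ofAdd (Pi.single i 1))) = coordHom j (ofAdd (Pi.single i 1))) :
    f.ker ≤ (coordHom j).ker := by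
  have comp_eq : p.comp f = coordHom j := by
    ext i
    exact congrArg toAdd (hp i)
  intro x hx
  rw [MonoidHom.mem_ker] at hx ⊢
  rw [← comp_eq, MonoidHom.comp_apply, hx, map_one]

end FreeAbelian

/-- Let `φ₁ : ℤ⁵ → ℤ²` be the group homomorphism determined on the standard
generators `a, b, c, d, μ` of `ℤ⁵` by `φ₁ a = 0`, `φ₁ b = 0`, `φ₁ c = (1,0)`, `φ₁ d = (0,1)`,
`φ₁ μ = 0`, and let `φ₂ : ℤ⁵ → ℤ²` be determined by `φ₂ a = 0`, `φ₂ b = (0,1)`,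
`φ₂ c = (1,0)`, `φ₂ d = 0`, `φ₂ μ = 0`.  Then the pushout of `φ₁` and `φ₂` in the category
of groups is isomorphic to `ℤ`. -/
theorem pushout_of_gluing_psi'_is_int
    (φ₁ φ₂ : Multiplicative (Fin 5 → ℤ) →* Multiplicative (ℤ × ℤ))
    (h₁a : φ₁ (Multiplicative.ofAdd (Pi.single 0 1)) = 1)
    (h₁b : φ₁ (Multiplicative.ofAdd (Pi.single 1 1)) = 1)
    (h₁c : φ₁ (Multiplicative.ofAdd (Pi.single 2 1)) = Multiplicative.ofAdd (1, 0))
    (h₁d : φ₁ (Multiplicative.ofAdd (Pi.single 3 1)) = Multiplicative.ofAdd (0, 1))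
    (h₁μ : φ₁ (Multiplicative.ofAdd (Pi.single 4 1)) = 1)
    (h₂a : φ₂ (Multiplicative.ofAdd (Pi.single 0 1)) = 1)
    (h₂b : φ₂ (Multiplicative.ofAdd (Pi.single 1 1)) = Multiplicative.ofAdd (0, 1))
    (h₂c : φ₂ (Multiplicative.ofAdd (Pi.single 2 1)) = Multiplicative.ofAdd (1, 0))
    (h₂d : φ₂ (Multiplicative.ofAdd (Pi.single 3 1)) = 1)
    (h₂μ : φ₂ (Multiplicative.ofAdd (Pi.single 4 1)) = 1) :
    Nonempty (Monoid.PushoutI (fun b : Bool => if b then φ₁ else φ₂) ≃* Multiplicative ℤ) := by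
  have surjective₁ : Function.Surjective φ₁ := surjective_of_map_eq_basis h₁c h₁d
  have surjective₂ : Function.Surjective φ₂ := surjective_of_map_eq_basis h₂c h₂b
  have ker₁_le : φ₁.ker ≤ (coordHom 2).ker :=
    ker_le_ker_coordHom (AddMonoidHom.toMultiplicative (AddMonoidHom.fst ℤ ℤ)) fun i => by
      fin_cases i <;> simp [*, coordHom]
  have ker₂_le : φ₂.ker ≤ (coordHom 2).ker :=
    ker_le_ker_coordHom (AddMonoidHom.toMultiplicative (AddMonoidHom.fst ℤ ℤ)) fun i => by
      fin_cases i <;> simp [*, coordHom]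
  have le_sup_ker : (coordHom 2).ker ≤ φ₁.ker ⊔ φ₂.ker := ker_coordHom_le fun i hi => by
    fin_cases i
    · exact Subgroup.mem_sup_left h₁a
    · exact Subgroup.mem_sup_left h₁b
    · exact absurd rfl hi
    · exact Subgroup.mem_sup_right h₂d
    · exact Subgroup.mem_sup_left h₁μ
  refine nonempty_pushoutI_mulEquiv_of_ker_eq (Bool.forall_bool.2 ⟨surjective₂, surjective₁⟩)
    (coordHom_surjective 2) ?_
  rw [iSup_bool_eq]
  exact le_sup_ker.antisymm (sup_le ker₁_le ker₂_le)
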